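/- For every ε > 0 there exists θ > 0 with the following property. Let A be a real 2×2 matrix with determinant 1 whose characteristic multipliers are real with absolute value different from 1 (A hyperbolic), with unit eigenvectors u and v corresponding to the eigenvalues λ and λ⁻¹ respectively, and suppose the angle between the eigendirections ℝu and ℝv is less than θ (i.e. |⟨u, v⟩| > cos θ). Then there exists α with |α| < ε such that R_α A is elliptic, i.e. |tr(R_α A)| < 2, where R_α = [[cos α, −sin α],[sin α, cos α]] is the rotation by α. -/

import Mathlib

open Matrix Real

/-!
Let `R` be the rotation through the angle between the eigendirections `ℝu` and `ℝv`, with the sign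
of `v` chosen so that `R u = v`, and let `λ`, `μ` be the eigenvalues of `A` at `u`, `v`. The area
form `ω` satisfies `tr(M) ω(u, v) = ω(Mu, v) + ω(u, Mv)` for every `M`, hence
`tr(RA) ω(u, v) = λ ω(v, v) + μ ω(u, Rv) = μ ω(u, Rv) = μ tr(R) ω(u, v)`.
Thus `|tr(RA)| = 2|μ| |⟨u, v⟩|`, which is less than `2` as soon as `|μ| ≤ 1`; interchanging `u` and
`v` if necessary, `μ` is the eigenvalue of smaller modulus.
-/

/-- The matrix of the counterclockwise rotation of the plane by the angle `α`, acting on column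
vectors: the perturbation by which a return map is composed. -/
noncomputable def rotationMatrix (α : ℝ) : Matrix (Fin 2) (Fin 2) ℝ :=
  !![cos α, -sin α; sin α, cos α]

section AreaForm

variable {R : Type*} [CommRing R]

theorem trace_mul_det_fin_two (M : Matrix (Fin 2) (Fin 2) R) (u v : Fin 2 → R) :
    M.trace * (of ![u, v]).det = (of ![M *ᵥ u, v]).det + (of ![u, M *ᵥ v]).det := by
  simp only [trace_fin_two, det_fin_two, mulVec, dotProduct, Fin.sum_univ_two, of_apply,
    cons_val_zero, cons_val_one]
  ring

theorem dotProduct_sq_add_det_sq (u v : Fin 2 → R) :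
    (u ⬝ᵥ v) ^ 2 + (of ![u, v]).det ^ 2 = (u ⬝ᵥ u) * (v ⬝ᵥ v) := by
  simp only [det_fin_two, dotProduct, Fin.sum_univ_two, of_apply, cons_val_zero, cons_val_one]
  ring

theorem trace_mul_eq_of_mulVec_eq [IsDomain R] {B A : Matrix (Fin 2) (Fin 2) R} {lam mu : R}
    {u v : Fin 2 → R} (huv : (of ![u, v]).det ≠ 0) (hBu : B *ᵥ u = v)
    (hAu : A *ᵥ u = lam • u) (hAv : A *ᵥ v = mu • v) :
    (B * A).trace = mu * B.trace := by
  have hBAu : (of ![(B * A) *ᵥ u, v]).det = 0 := by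
    rw [← mulVec_mulVec, hAu, mulVec_smul, hBu]
    simp [det_fin_two, mul_right_comm]
  have hBAv : (of ![u, (B * A) *ᵥ v]).det = mu * (of ![u, B *ᵥ v]).det := by
    rw [← mulVec_mulVec, hAv, mulVec_smul]
    simp only [det_fin_two, of_apply, cons_val_zero, cons_val_one, Pi.smul_apply, smul_eq_mul]
    ring
  have hvv : (of ![B *ᵥ u, v]).det = 0 := by
    rw [hBu]
    exact det_zero_of_row_eq zero_ne_one rfl
  refine mul_right_cancel₀ huv ?_
  calc (B * A).trace * (of ![u, v]).det
      = mu * (of ![u, B *ᵥ v]).det := by rw [trace_mul_det_fin_two, hBAu, hBAv, zero_add]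
    _ = mu * B.trace * (of ![u, v]).det := by
      rw [mul_assoc, trace_mul_det_fin_two, hvv, zero_add]

end AreaForm

theorem ne_zero_of_dotProduct_self_eq_one {n : Type*} [Fintype n] {R : Type*}
    [NonAssocSemiring R] [Nontrivial R] {u : n → R} (hu : u ⬝ᵥ u = 1) : u ≠ 0 := by
  rintro rfl
  exact zero_ne_one ((zero_dotProduct 0).symm.trans hu)

section Eigenvectors

variable {R n : Type*} [CommRing R] [IsDomain R] [Fintype n] [DecidableEq n] {A : Matrix n n R}

theorem ne_zero_of_mulVec_eq_smul {lam : R} {u : n → R} (hA : A.det ≠ 0) (hu : u ≠ 0)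
    (hAu : A *ᵥ u = lam • u) : lam ≠ 0 := by
  rintro rfl
  exact hA (exists_mulVec_eq_zero_iff.1 ⟨u, hu, by rw [hAu, zero_smul]⟩)

theorem det_ne_zero_of_mulVec_eq_smul {lam : n → R} {w : n → n → R}
    (hlam : Function.Injective lam) (hw : ∀ i, w i ≠ 0) (hAw : ∀ i, A *ᵥ w i = lam i • w i) :
    (of w).det ≠ 0 := by
  have hli : LinearIndependent R (of w).row :=
    Module.End.eigenvectors_linearIndependent' (toLin' A) lam hlam w fun i =>
      Module.End.hasEigenvector_iff.2 ⟨Module.End.mem_eigenspace_iff.2 (hAw i), hw i⟩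
  exact nonsingular_iff_det_ne_zero.1 (Nonsingular.of_linearIndependent_row hli)

theorem det_pair_ne_zero_of_mulVec_eq_smul {A : Matrix (Fin 2) (Fin 2) R} {lam mu : R}
    {u v : Fin 2 → R} (hne : lam ≠ mu) (hu : u ≠ 0) (hv : v ≠ 0)
    (hAu : A *ᵥ u = lam • u) (hAv : A *ᵥ v = mu • v) : (of ![u, v]).det ≠ 0 :=
  det_ne_zero_of_mulVec_eq_smul (lam := ![lam, mu])
    (by simp [Function.Injective, Fin.forall_fin_two, hne, hne.symm])
    (Fin.forall_fin_two.2 ⟨hu, hv⟩) (Fin.forall_fin_two.2 ⟨hAu, hAv⟩)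

end Eigenvectors

section Rotation

theorem trace_rotationMatrix (α : ℝ) : (rotationMatrix α).trace = 2 * cos α := by
  simp [rotationMatrix, trace_fin_two, two_mul]

theorem exists_abs_eq_arccos_of_sq_add_sq_eq_one {c s : ℝ} (h : c ^ 2 + s ^ 2 = 1) :
    ∃ α, |α| = arccos c ∧ cos α = c ∧ sin α = s := by
  have hnorm : ‖(⟨c, s⟩ : ℂ)‖ = 1 := by
    rw [Complex.norm_eq_sqrt_sq_add_sq, h, sqrt_one]
  have hne : (⟨c, s⟩ : ℂ) ≠ 0 := norm_ne_zero_iff.1 (hnorm ▸ one_ne_zero)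
  have hcos : cos (Complex.arg ⟨c, s⟩) = c := by rw [Complex.cos_arg hne, hnorm, div_one]
  have hsin : sin (Complex.arg ⟨c, s⟩) = s := by rw [Complex.sin_arg, hnorm, div_one]
  refine ⟨Complex.arg ⟨c, s⟩, Eq.symm ?_, hcos, hsin⟩
  exact arccos_eq_of_eq_cos (abs_nonneg _) (Complex.abs_arg_le_pi _) (by rw [cos_abs, hcos])

theorem exists_rotationMatrix_mulVec_eq {u v : Fin 2 → ℝ} (hu : u ⬝ᵥ u = 1) (hv : v ⬝ᵥ v = 1) :
    ∃ α, |α| = arccos (u ⬝ᵥ v) ∧ cos α = u ⬝ᵥ v ∧ rotationMatrix α *ᵥ u = v := by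
  have hsq : (u ⬝ᵥ v) ^ 2 + (of ![u, v]).det ^ 2 = 1 := by
    rw [dotProduct_sq_add_det_sq, hu, hv, one_mul]
  obtain ⟨α, hα, hcos, hsin⟩ := exists_abs_eq_arccos_of_sq_add_sq_eq_one hsq
  refine ⟨α, hα, hcos, ?_⟩
  rw [rotationMatrix, hcos, hsin]
  simp only [dotProduct, Fin.sum_univ_two] at hu
  simp only [funext_iff, Fin.forall_fin_two, mulVec, dotProduct, det_fin_two, Fin.sum_univ_two,
    of_apply, cons_val_zero, cons_val_one]
  exact ⟨by linear_combination v 0 * hu, by linear_combination v 1 * hu⟩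

theorem abs_dotProduct_lt_one {u v : Fin 2 → ℝ} (hu : u ⬝ᵥ u = 1) (hv : v ⬝ᵥ v = 1)
    (huv : (of ![u, v]).det ≠ 0) : |u ⬝ᵥ v| < 1 := by
  have hsq := dotProduct_sq_add_det_sq u v
  rw [hu, hv, one_mul] at hsq
  rw [← sq_lt_one_iff_abs_lt_one]
  linarith [sq_pos_of_ne_zero huv]

theorem arccos_lt_of_cos_lt {x θ : ℝ} (hθ : 0 < θ) (hθπ : θ ≤ π) (h : cos θ < x) :
    arccos x < θ := by
  rcases le_total x 1 with hx | hx
  · exact (arccos_lt_arccos (neg_one_le_cos θ) h hx).trans_eq (arccos_cos hθ.le hθπ)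
  · rwa [arccos_of_one_le hx]

end Rotation

section Elliptic

variable {A : Matrix (Fin 2) (Fin 2) ℝ} {lam mu : ℝ} {u v : Fin 2 → ℝ}

theorem exists_abs_trace_rotationMatrix_mul_lt_two_of_abs_le_one (hne : lam ≠ mu) (hmu : |mu| ≤ 1)
    (hu : u ⬝ᵥ u = 1) (hv : v ⬝ᵥ v = 1) (hAu : A *ᵥ u = lam • u) (hAv : A *ᵥ v = mu • v) :
    ∃ α, |α| = arccos |u ⬝ᵥ v| ∧ |(rotationMatrix α * A).trace| < 2 := by
  wlog huv : 0 ≤ u ⬝ᵥ v generalizing v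
  · rw [← abs_neg, ← dotProduct_neg]
    refine this (v := -v) (by rwa [neg_dotProduct_neg]) (by rw [mulVec_neg, hAv, smul_neg]) ?_
    rw [dotProduct_neg]
    exact neg_nonneg.2 (not_le.1 huv).le
  have hdet : (of ![u, v]).det ≠ 0 := det_pair_ne_zero_of_mulVec_eq_smul hne
    (ne_zero_of_dotProduct_self_eq_one hu) (ne_zero_of_dotProduct_self_eq_one hv) hAu hAv
  obtain ⟨α, hα, hcos, hrot⟩ := exists_rotationMatrix_mulVec_eq hu hv
  refine ⟨α, by rw [hα, abs_of_nonneg huv], ?_⟩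
  calc |(rotationMatrix α * A).trace|
      = |mu| * (2 * |u ⬝ᵥ v|) := by
        rw [trace_mul_eq_of_mulVec_eq hdet hrot hAu hAv, trace_rotationMatrix, hcos, abs_mul,
          abs_mul, abs_two]
    _ ≤ 1 * (2 * |u ⬝ᵥ v|) := by gcongr
    _ < 2 := by linarith [abs_dotProduct_lt_one hu hv hdet]

theorem exists_abs_trace_rotationMatrix_mul_lt_two_of_min_abs_le_one (hne : lam ≠ mu)
    (hmin : min |lam| |mu| ≤ 1) (hu : u ⬝ᵥ u = 1) (hv : v ⬝ᵥ v = 1)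
    (hAu : A *ᵥ u = lam • u) (hAv : A *ᵥ v = mu • v) :
    ∃ α, |α| = arccos |u ⬝ᵥ v| ∧ |(rotationMatrix α * A).trace| < 2 := by
  rcases min_le_iff.1 hmin with hlam | hmu
  · rw [dotProduct_comm]
    exact exists_abs_trace_rotationMatrix_mul_lt_two_of_abs_le_one hne.symm hlam hv hu hAv hAu
  · exact exists_abs_trace_rotationMatrix_mul_lt_two_of_abs_le_one hne hmu hu hv hAu hAv

end Elliptic

section Hyperbolic

variable {K : Type*} [Field K] [LinearOrder K] [IsStrictOrderedRing K]

theorem min_abs_abs_inv_le_one (x : K) : min |x| |x⁻¹| ≤ 1 := by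
  rw [abs_inv, min_le_iff]
  exact (le_total |x| 1).imp_right inv_le_one_of_one_le₀

theorem ne_inv_of_abs_ne_one {x : K} (hx₀ : x ≠ 0) (hx : |x| ≠ 1) : x ≠ x⁻¹ := by
  rw [Ne, self_eq_inv₀]
  rintro (rfl | rfl | rfl) <;> simp at hx hx₀

end Hyperbolic

theorem small_angle_hyperbolic_rotate_to_elliptic_general :
    ∀ ε > 0, ∃ θ > 0, ∀ (A : Matrix (Fin 2) (Fin 2) ℝ) (lam mu : ℝ) (u v : Fin 2 → ℝ),
      lam ≠ mu → min |lam| |mu| ≤ 1 →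
      u ⬝ᵥ u = 1 → v ⬝ᵥ v = 1 →
      A *ᵥ u = lam • u → A *ᵥ v = mu • v →
      |u ⬝ᵥ v| > cos θ →
      ∃ α : ℝ, |α| < ε ∧ |(rotationMatrix α * A).trace| < 2 := by
  intro ε hε
  have hθ : 0 < min ε π := lt_min hε pi_pos
  refine ⟨min ε π, hθ, fun A lam mu u v hne hmin hu hv hAu hAv huv => ?_⟩
  obtain ⟨α, hα, htrace⟩ :=
    exists_abs_trace_rotationMatrix_mul_lt_two_of_min_abs_le_one hne hmin hu hv hAu hAv
  have hangle : arccos |u ⬝ᵥ v| < min ε π := arccos_lt_of_cos_lt hθ (min_le_right _ _) huv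
  exact ⟨α, hα.trans_lt (hangle.trans_le (min_le_left _ _)), htrace⟩

/-- For every `ε > 0` there exists `θ > 0` with the following
property.  Let `A ∈ SL(2,ℝ)` be hyperbolic (real eigenvalues `λ`, `λ⁻¹` with
`|λ| ≠ 1`), with unit eigenvectors `u`, `v` for `λ`, `λ⁻¹` respectively, and suppose
the angle between the eigendirections is less than `θ` (i.e. `|⟨u, v⟩| > cos θ`).
Then there exists `α` with `|α| < ε` such that `R_α A` is elliptic, i.e.
`|tr (R_α A)| < 2`, where `R_α` is the rotation by `α`. -/
theorem small_angle_hyperbolic_rotate_to_elliptic :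
    ∀ ε > 0, ∃ θ > 0, ∀ (A : Matrix (Fin 2) (Fin 2) ℝ) (lam : ℝ) (u v : Fin 2 → ℝ),
      A.det = 1 → |lam| ≠ 1 →
      u ⬝ᵥ u = 1 → v ⬝ᵥ v = 1 →
      A.mulVec u = lam • u → A.mulVec v = lam⁻¹ • v →
      |u ⬝ᵥ v| > Real.cos θ →
      ∃ α : ℝ, |α| < ε ∧ |(!![cos α, -sin α; sin α, cos α] * A).trace| < 2 := by
  intro ε hε
  obtain ⟨θ, hθ, hrotate⟩ := small_angle_hyperbolic_rotate_to_elliptic_general ε hε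
  refine ⟨θ, hθ, fun A lam u v hdet hlam hu hv hAu hAv huv => ?_⟩
  have hlam₀ : lam ≠ 0 := ne_zero_of_mulVec_eq_smul (hdet ▸ one_ne_zero)
    (ne_zero_of_dotProduct_self_eq_one hu) hAu
  exact hrotate A lam lam⁻¹ u v (ne_inv_of_abs_ne_one hlam₀ hlam) (min_abs_abs_inv_le_one lam)
    hu hv hAu hAv huv
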